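/- (Lemma 1, '▽' identity.) Let W be a binary-input discrete memoryless channel with finite output alphabet 𝒴, let n = 2^m ≥ 4, and let 1 ≤ i ≤ n/2 − 1. Then for all y ∈ 𝒴ⁿ and all u₁,…,u_{2i} ∈ 𝔽₂: V_{2i−1}^{(n)}(y, (u₁,…,u_{2i−2}) | u_{2i−1}, u_{2i}) = (1/4)·∑_{c,d ∈ 𝔽₂} V_i^{(n/2)}(y_odd, (ũ₁, ũ₃, …, ũ_{2i−3}) | u_{2i−1}+u_{2i}, c+d) · V_i^{(n/2)}(y_even, (ũ₂, ũ₄, …, ũ_{2i−2}) | u_{2i}, d). This is the identity V_{2i−1}^{(n)} = (V_i^{(n/2)})^▽. -/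

import Mathlib

/-!
The event that conditions an adjacent-bits-channel has probability `1/4`, so each channel value is
`4 · 2^{-m}` times a sum of codeword likelihoods over the messages that agree with the prescribed
bits (`adjChannel_eq`). Summing over the second adjacent bit `b` just frees that bit
(`sum_adjChannel`), and because `(c, d) ↦ (c + d, d)` is a bijection, the right-hand side is the
product of two such freed sums, for `y_odd` and `y_even`.

On the other side, `u ↦ (ũ_odd, ũ_even)` is a bijection `𝔽₂^{2m} ≃ 𝔽₂^m × 𝔽₂^m`
(`splitEquiv`) under which the codeword `u (A ⊗ G₂)` becomes the interleaving of `ũ_odd A` and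
`ũ_even A`. It turns the likelihood into a product and fixing the first `2i` bits of `u` into fixing
the first `i` bits of both halves, so the left-hand sum factors in the same way.
-/

open scoped Classical

/-- Probability of an event `E` under a pmf `P` on a finite space. -/
noncomputable def prob {Ω : Type*} [Fintype Ω] (P : Ω → ℝ) (E : Ω → Prop) : ℝ :=
  ∑ ω : Ω, if E ω then P ω else 0

/-- The polar-coding model `μ_G`: the joint pmf on message/output pairs, where the message
`u` is uniform on `𝔽₂ⁿ`, the codeword is `uG`, and each coordinate is sent through the
binary-input channel `W` (here `W x y` denotes the transition probability `W(y|x)`). -/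
noncomputable def polarPMF {𝒴 : Type*} [Fintype 𝒴] {n : ℕ}
    (W : ZMod 2 → 𝒴 → ℝ) (G : Matrix (Fin n) (Fin n) (ZMod 2)) :
    (Fin n → ZMod 2) × (Fin n → 𝒴) → ℝ :=
  fun p => (1 / 2 : ℝ) ^ n * ∏ j, W (Matrix.vecMul p.1 G j) (p.2 j)

/-- The adjacent-bits-channel `V_i^M` of the model `μ_M` (0-based index `i`):
`V_i^M(y, (u_0, …, u_{i-1}) | a, b) = P(Y = y, U_0 = u_0, …, U_{i-1} = u_{i-1} | U_i = a, U_{i+1} = b)`.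
Only the values `upre j` for `j < i` are relevant. -/
noncomputable def adjChannel {𝒴 : Type*} [Fintype 𝒴] {m : ℕ}
    (W : ZMod 2 → 𝒴 → ℝ) (M : Matrix (Fin m) (Fin m) (ZMod 2))
    (i : ℕ) (y : Fin m → 𝒴) (upre : ℕ → ZMod 2) (a b : ZMod 2) : ℝ :=
  prob (polarPMF W M)
      (fun p => p.2 = y ∧ ∀ j : Fin m,
        (j.val < i → p.1 j = upre j.val) ∧ (j.val = i → p.1 j = a) ∧
          (j.val = i + 1 → p.1 j = b)) /
    prob (polarPMF W M)
      (fun p => ∀ j : Fin m, (j.val = i → p.1 j = a) ∧ (j.val = i + 1 → p.1 j = b))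

/-- The 2×2 Arıkan kernel `G₂ = [[1,0],[1,1]]` over `𝔽₂`. -/
def G2 : Matrix (Fin 2) (Fin 2) (ZMod 2) := !![1, 0; 1, 1]

/-- The Kronecker product `A ⊗ G₂` under the interleaved index identification
`(j, k) ↦ 2j + k` (0-based): `(A ⊗ G₂)(r, c) = A(r/2, c/2) · G₂(r%2, c%2)`. -/
def interKron {m : ℕ} (A : Matrix (Fin m) (Fin m) (ZMod 2)) :
    Matrix (Fin (2 * m)) (Fin (2 * m)) (ZMod 2) :=
  fun r c =>
    A ⟨r.val / 2, by have := r.isLt; omega⟩ ⟨c.val / 2, by have := c.isLt; omega⟩ *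
      G2 ⟨r.val % 2, by omega⟩ ⟨c.val % 2, by omega⟩

/-- The polar matrix `G_{2^m}^polar = G₂^{⊗ m}` (via `G_{2n} = G_n ⊗ G₂`,
interleaved identification). -/
def Gpolar : (m : ℕ) → Matrix (Fin (2 ^ m)) (Fin (2 ^ m)) (ZMod 2)
  | 0 => 1
  | m + 1 => Matrix.reindex (finCongr (by ring)) (finCongr (by ring)) (interKron (Gpolar m))

/-- Products over `Fin (2 * m)`, grouped into pairs of consecutive indices. -/
lemma prod_fin_two_mul {R : Type*} [CommMonoid R] {m : ℕ} (f : Fin (2 * m) → R) :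
    ∏ r, f r = ∏ j : Fin m, (f ⟨2 * j.val, by omega⟩ * f ⟨2 * j.val + 1, by omega⟩) := by
  rw [← Equiv.prod_comp (finProdFinEquiv.trans (finCongr (Nat.mul_comm m 2))) f,
    Fintype.prod_prod_type]
  refine Finset.prod_congr rfl fun j _ => ?_
  rw [Fin.prod_univ_two]
  congr 2 <;> apply Fin.ext <;> (simp [finProdFinEquiv]; try omega)

lemma sum_fin_two_mul {R : Type*} [AddCommMonoid R] {m : ℕ} (f : Fin (2 * m) → R) :
    ∑ r, f r = ∑ j : Fin m, (f ⟨2 * j.val, by omega⟩ + f ⟨2 * j.val + 1, by omega⟩) :=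
  prod_fin_two_mul (R := Multiplicative R) f

/-- The bijection `u ↦ (ũ_odd, ũ_even)` (in 1-based terms): component `j` of the first half is
`u (2j) + u (2j+1)` and of the second half `u (2j+1)`. -/
def splitEquiv (m : ℕ) :
    (Fin (2 * m) → ZMod 2) ≃ (Fin m → ZMod 2) × (Fin m → ZMod 2) where
  toFun u := (fun j => u ⟨2 * j.val, by omega⟩ + u ⟨2 * j.val + 1, by omega⟩,
    fun j => u ⟨2 * j.val + 1, by omega⟩)
  invFun p := fun r => if r.val % 2 = 0 then
      p.1 ⟨r.val / 2, by omega⟩ + p.2 ⟨r.val / 2, by omega⟩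
    else p.2 ⟨r.val / 2, by omega⟩
  left_inv u := by
    funext r
    by_cases h : r.val % 2 = 0
    · have e : (⟨2 * (r.val / 2), by omega⟩ : Fin (2 * m)) = r := Fin.ext (by simp; omega)
      simp only [h, if_true, e, add_assoc, CharTwo.add_self_eq_zero, add_zero]
    · have e : (⟨2 * (r.val / 2) + 1, by omega⟩ : Fin (2 * m)) = r := Fin.ext (by simp; omega)
      simp only [h, if_false, e]
  right_inv p := by
    have e (j : Fin m) : (2 * j.val + 1) / 2 = j.val := by omega
    have e' (j : Fin m) : (2 * j.val + 1) % 2 = 1 := by omega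
    ext j <;> simp [e, e', add_assoc, CharTwo.add_self_eq_zero]

lemma vecMul_interKron_even {m : ℕ} (A : Matrix (Fin m) (Fin m) (ZMod 2))
    (u : Fin (2 * m) → ZMod 2) (l : Fin m) :
    Matrix.vecMul u (interKron A) ⟨2 * l.val, by omega⟩ =
      Matrix.vecMul (splitEquiv m u).1 A l := by
  have e (j : Fin m) : (2 * j.val + 1) / 2 = j.val := by omega
  have e' (j : Fin m) : (2 * j.val + 1) % 2 = 1 := by omega
  simp [Matrix.vecMul, dotProduct, sum_fin_two_mul, interKron, splitEquiv, G2, e, e', add_mul]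

lemma vecMul_interKron_odd {m : ℕ} (A : Matrix (Fin m) (Fin m) (ZMod 2))
    (u : Fin (2 * m) → ZMod 2) (l : Fin m) :
    Matrix.vecMul u (interKron A) ⟨2 * l.val + 1, by omega⟩ =
      Matrix.vecMul (splitEquiv m u).2 A l := by
  have e (j : Fin m) : (2 * j.val + 1) / 2 = j.val := by omega
  have e' (j : Fin m) : (2 * j.val + 1) % 2 = 1 := by omega
  simp [Matrix.vecMul, dotProduct, sum_fin_two_mul, interKron, splitEquiv, G2, e, e']

/-- A quarter of all messages have two prescribed bits at positions `i` and `i + 1`. -/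
lemma four_mul_card_adj {m i : ℕ} (hi : i + 1 < m) (a b : ZMod 2) :
    4 * (Finset.univ.filter fun u : Fin m → ZMod 2 =>
      ∀ j : Fin m, (j.val = i → u j = a) ∧ (j.val = i + 1 → u j = b)).card = 2 ^ m := by
  have h1 : (Finset.univ.filter fun u : Fin m → ZMod 2 =>
      ∀ j : Fin m, (j.val = i → u j = a) ∧ (j.val = i + 1 → u j = b)) =
      Fintype.piFinset fun j : Fin m =>
        if j = ⟨i, by omega⟩ then {a} else if j = ⟨i + 1, hi⟩ then {b} else Finset.univ := by
    ext u
    simp only [Finset.mem_filter, Finset.mem_univ, true_and, Fintype.mem_piFinset]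
    refine forall_congr' fun j => ?_
    simp only [Fin.ext_iff]
    split_ifs with h h'
    · simp [h]
    · simp [h']
    · simp [h, h']
  have h4 : 4 = ∏ j : Fin m, (if j = ⟨i, by omega⟩ then 2 else 1) *
      (if j = ⟨i + 1, hi⟩ then 2 else 1) := by
    rw [Finset.prod_mul_distrib]
    simp
  rw [h1, Fintype.card_piFinset, h4, ← Finset.prod_mul_distrib]
  trans ∏ _j : Fin m, 2
  · refine Finset.prod_congr rfl fun j _ => ?_
    simp only [Fin.ext_iff]
    split_ifs <;> first | omega | simp [ZMod.card]
  · simp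

lemma prob_adj {𝒴 : Type*} [Fintype 𝒴] (W : ZMod 2 → 𝒴 → ℝ) (hW1 : ∀ x, ∑ y, W x y = 1)
    {m i : ℕ} (M : Matrix (Fin m) (Fin m) (ZMod 2)) (hi : i + 1 < m) (a b : ZMod 2) :
    prob (polarPMF W M)
      (fun p => ∀ j : Fin m, (j.val = i → p.1 j = a) ∧ (j.val = i + 1 → p.1 j = b)) = 1 / 4 := by
  have hy (u : Fin m → ZMod 2) :
      ∑ y : Fin m → 𝒴, ∏ j, W (Matrix.vecMul u M j) (y j) = 1 := by
    rw [← Fintype.prod_sum]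
    simp [hW1]
  have hs : ∀ u : Fin m → ZMod 2, (∑ y : Fin m → 𝒴,
      if (∀ j : Fin m, (j.val = i → u j = a) ∧ (j.val = i + 1 → u j = b)) then
        (1 / 2 : ℝ) ^ m * ∏ j, W (Matrix.vecMul u M j) (y j) else 0) =
      if (∀ j : Fin m, (j.val = i → u j = a) ∧ (j.val = i + 1 → u j = b)) then
        (1 / 2 : ℝ) ^ m else 0 := by
    intro u
    split_ifs
    · rw [← Finset.mul_sum, hy, mul_one]
    · simp
  unfold prob polarPMF
  rw [Fintype.sum_prod_type]
  simp only [hs]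
  rw [← Finset.sum_filter, Finset.sum_const, nsmul_eq_mul]
  have h := congrArg (Nat.cast (R := ℝ)) (four_mul_card_adj hi a b)
  push_cast at h
  have h2 : (2 : ℝ) ^ m * (1 / 2) ^ m = 1 := by rw [← mul_pow]; norm_num
  rw [← h] at h2
  linarith

/-- The adjacent-bits-channel as a sum of codeword likelihoods. -/
lemma adjChannel_eq {𝒴 : Type*} [Fintype 𝒴] (W : ZMod 2 → 𝒴 → ℝ)
    (hW1 : ∀ x, ∑ y, W x y = 1) {m i : ℕ} (M : Matrix (Fin m) (Fin m) (ZMod 2))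
    (hi : i + 1 < m) (y : Fin m → 𝒴) (upre : ℕ → ZMod 2) (a b : ZMod 2) :
    adjChannel W M i y upre a b = 4 * (1 / 2 : ℝ) ^ m * ∑ u : Fin m → ZMod 2,
      if (∀ j : Fin m, (j.val < i → u j = upre j.val) ∧ (j.val = i → u j = a) ∧
          (j.val = i + 1 → u j = b))
        then ∏ j, W (Matrix.vecMul u M j) (y j) else 0 := by
  unfold adjChannel
  rw [prob_adj W hW1 M hi]
  unfold prob polarPMF
  rw [Fintype.sum_prod_type]
  simp only [ite_and, Finset.sum_ite_eq', Finset.mem_univ, if_true]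
  rw [div_eq_mul_inv, mul_comm, mul_assoc, Finset.mul_sum, Finset.mul_sum, Finset.mul_sum]
  refine Finset.sum_congr rfl fun u _ => ?_
  split_ifs <;> norm_num

/-- Summing over the second adjacent bit frees it: only the bits up to position `i` stay fixed. -/
lemma sum_adjChannel {𝒴 : Type*} [Fintype 𝒴] (W : ZMod 2 → 𝒴 → ℝ)
    (hW1 : ∀ x, ∑ y, W x y = 1) {m i : ℕ} (M : Matrix (Fin m) (Fin m) (ZMod 2))
    (hi : i + 1 < m) (y : Fin m → 𝒴) (upre : ℕ → ZMod 2) :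
    ∑ b, adjChannel W M i y upre (upre i) b =
      4 * (1 / 2 : ℝ) ^ m * ∑ u : Fin m → ZMod 2,
        if (∀ j : Fin m, j.val ≤ i → u j = upre j.val)
          then ∏ j, W (Matrix.vecMul u M j) (y j) else 0 := by
  simp only [adjChannel_eq W hW1 M hi]
  rw [← Finset.mul_sum, Finset.sum_comm]
  congr 1
  refine Finset.sum_congr rfl fun u _ => ?_
  have key : ∀ b, (∀ j : Fin m, (j.val < i → u j = upre j.val) ∧ (j.val = i → u j = upre i) ∧
      (j.val = i + 1 → u j = b)) ↔
      (u ⟨i + 1, hi⟩ = b ∧ ∀ j : Fin m, j.val ≤ i → u j = upre j.val) := by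
    intro b
    constructor
    · intro h
      refine ⟨(h ⟨i + 1, hi⟩).2.2 rfl, fun j hj => ?_⟩
      rcases hj.lt_or_eq with hj | hj
      · exact (h j).1 hj
      · rw [(h j).2.1 hj, hj]
    · rintro ⟨rfl, h⟩ j
      refine ⟨fun hj => h j hj.le, fun hj => ?_, fun hj => ?_⟩
      · rw [h j hj.le, hj]
      · exact congrArg u (Fin.ext hj)
  simp only [key, ite_and, Finset.sum_ite_eq, Finset.mem_univ, if_true]

/-- The `▽` identity (0-based `i`) for an arbitrary matrix `A` in place of the polar matrix; the
size `n = 2 * m` is kept as a variable to absorb the reindexing in `Gpolar`. -/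
lemma adjChannel_interKron {𝒴 : Type*} [Fintype 𝒴] (W : ZMod 2 → 𝒴 → ℝ)
    (hW1 : ∀ x, ∑ y, W x y = 1) {m n i : ℕ} (A : Matrix (Fin m) (Fin m) (ZMod 2))
    (h : 2 * m = n) (hi : i + 1 < m) (y : Fin n → 𝒴) (u : ℕ → ZMod 2) :
    adjChannel W (Matrix.reindex (finCongr h) (finCongr h) (interKron A)) (2 * i) y u
        (u (2 * i)) (u (2 * i + 1)) =
      (1 / 4 : ℝ) * ∑ c : ZMod 2, ∑ d : ZMod 2,
        adjChannel W A i (fun j => y ⟨2 * j.val, by omega⟩)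
            (fun t => u (2 * t) + u (2 * t + 1)) (u (2 * i) + u (2 * i + 1)) (c + d) *
          adjChannel W A i (fun j => y ⟨2 * j.val + 1, by omega⟩)
            (fun t => u (2 * t + 1)) (u (2 * i + 1)) d := by
  subst h
  have hre : Matrix.reindex (finCongr (rfl : 2 * m = 2 * m)) (finCongr rfl) (interKron A) =
      interKron A := by ext; rfl
  -- For fixed `d`, the substitution `c ↦ c + d` separates the two sums.
  have hsep (F G : ZMod 2 → ℝ) : ∑ c, ∑ d, F (c + d) * G d = (∑ c, F c) * ∑ d, G d := by
    rw [Finset.sum_comm, Finset.mul_sum]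
    refine Finset.sum_congr rfl fun d _ => ?_
    rw [← Finset.sum_mul]
    exact congrArg (· * G d) (Equiv.sum_comp (Equiv.addRight d) F)
  rw [hre, hsep, sum_adjChannel W hW1 A hi _ (fun t => u (2 * t) + u (2 * t + 1)),
    sum_adjChannel W hW1 A hi _ (fun t => u (2 * t + 1)), adjChannel_eq W hW1 _ (by omega)]
  have hpow : (1 / 2 : ℝ) ^ (2 * m) = (1 / 2) ^ m * (1 / 2) ^ m := by rw [two_mul, pow_add]
  have hsum : (∑ x : Fin (2 * m) → ZMod 2,
      if (∀ j : Fin (2 * m), (j.val < 2 * i → x j = u j.val) ∧ (j.val = 2 * i → x j = u (2 * i)) ∧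
          (j.val = 2 * i + 1 → x j = u (2 * i + 1)))
        then ∏ j, W (Matrix.vecMul x (interKron A) j) (y j) else 0) =
      (∑ v : Fin m → ZMod 2,
        if (∀ j : Fin m, j.val ≤ i → v j = u (2 * j.val) + u (2 * j.val + 1))
          then ∏ j, W (Matrix.vecMul v A j) (y ⟨2 * j.val, by omega⟩) else 0) *
      ∑ w : Fin m → ZMod 2,
        if (∀ j : Fin m, j.val ≤ i → w j = u (2 * j.val + 1))
          then ∏ j, W (Matrix.vecMul w A j) (y ⟨2 * j.val + 1, by omega⟩) else 0 := by
    rw [Finset.sum_mul_sum, ← Fintype.sum_prod_type', ← Equiv.sum_comp (splitEquiv m)]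
    refine Finset.sum_congr rfl fun x _ => ?_
    rw [ite_zero_mul_ite_zero, prod_fin_two_mul]
    simp only [vecMul_interKron_even, vecMul_interKron_odd, Finset.prod_mul_distrib]
    refine if_congr ?_ rfl rfl
    constructor
    · intro hx
      have hx' : ∀ j : Fin (2 * m), j.val < 2 * i + 2 → x j = u j.val := by
        intro j hj
        rcases (by omega : j.val < 2 * i ∨ j.val = 2 * i ∨ j.val = 2 * i + 1) with h | h | h
        · exact (hx j).1 h
        · rw [(hx j).2.1 h, h]
        · rw [(hx j).2.2 h, h]
      refine ⟨fun j hj => ?_, fun j hj => hx' ⟨2 * j.val + 1, by omega⟩ (by simp; omega)⟩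
      exact congrArg₂ (· + ·) (hx' ⟨2 * j.val, by omega⟩ (by simp; omega))
        (hx' ⟨2 * j.val + 1, by omega⟩ (by simp; omega))
    · rintro ⟨hv, hw⟩
      have hx' : ∀ j : Fin (2 * m), j.val < 2 * i + 2 → x j = u j.val := by
        intro j hj
        have h1 := hw ⟨j.val / 2, by omega⟩ (by simp; omega)
        have h0 := hv ⟨j.val / 2, by omega⟩ (by simp; omega)
        simp only [splitEquiv, Equiv.coe_fn_mk] at h0 h1
        rw [h1] at h0
        have h0 := add_right_cancel h0
        rcases Nat.mod_two_eq_zero_or_one j.val with hj | hj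
        · have e : 2 * (j.val / 2) = j.val := by omega
          simpa only [e] using h0
        · have e : 2 * (j.val / 2) + 1 = j.val := by omega
          simpa only [e] using h1
      refine fun j => ⟨fun hj => hx' j (by omega), fun hj => ?_, fun hj => ?_⟩
      · rw [hx' j (by omega), hj]
      · rw [hx' j (by omega), hj]
  rw [hsum, hpow]
  ring

/-- Lemma 1, '▽' identity: `V_{2i-1}^{(n)} = (V_i^{(n/2)})^▽` (paper's 1-based index `i`,
`n = 2^(k+2) ≥ 4`, `1 ≤ i ≤ n/2 − 1`; the channels below use 0-based indices). -/
theorem adjChannel_polar_nabla {𝒴 : Type*} [Fintype 𝒴]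
    (W : ZMod 2 → 𝒴 → ℝ) (hW0 : ∀ x y, 0 ≤ W x y) (hW1 : ∀ x, ∑ y, W x y = 1)
    (k i : ℕ) (hi1 : 1 ≤ i) (hi2 : i ≤ 2 ^ (k + 1) - 1)
    (y : Fin (2 ^ (k + 2)) → 𝒴) (u : ℕ → ZMod 2) :
    adjChannel W (Gpolar (k + 2)) (2 * i - 2) y u (u (2 * i - 2)) (u (2 * i - 1)) =
      (1 / 4 : ℝ) * ∑ c : ZMod 2, ∑ d : ZMod 2,
        adjChannel W (Gpolar (k + 1)) (i - 1)
            (fun j => y ⟨2 * j.val, by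
              have := j.isLt; have h : (2 : ℕ) ^ (k + 2) = 2 * 2 ^ (k + 1) := (by ring); omega⟩)
            (fun t => u (2 * t) + u (2 * t + 1)) (u (2 * i - 2) + u (2 * i - 1)) (c + d) *
          adjChannel W (Gpolar (k + 1)) (i - 1)
            (fun j => y ⟨2 * j.val + 1, by
              have := j.isLt; have h : (2 : ℕ) ^ (k + 2) = 2 * 2 ^ (k + 1) := (by ring); omega⟩)
            (fun t => u (2 * t + 1)) (u (2 * i - 1)) d := by
  obtain ⟨i, rfl⟩ : ∃ t, i = t + 1 := ⟨i - 1, by omega⟩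
  exact adjChannel_interKron W hW1 (Gpolar (k + 1)) (by ring) (by omega) y u
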